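/- (Shutdown instructability benefit.) In a finite shutdown scenario with a counterfactual shutdown indicator S₀, if the policy is obedient (S₀(ω) = false for all ω with P({ω}) > 0), ensures vigilance, and is cautious (E[U₀] ≥ 0), then it is beneficial: E[U] ≥ 0. -/

import Mathlib

open Finset

attribute [local instance] Classical.propDecidable

/-- Expectation of `X` under the finite probability mass function `P`. -/
noncomputable def pexp {Ω : Type} [Fintype Ω] (P X : Ω → ℝ) : ℝ := ∑ ω, P ω * X ω

/-- Probability of the event `A` under `P`. -/
noncomputable def pr {Ω : Type} [Fintype Ω] (P : Ω → ℝ) (A : Ω → Prop) : ℝ :=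
  ∑ ω, if A ω then P ω else 0

/-- Conditional expectation `E[X | A]` under `P`. -/
noncomputable def cexp {Ω : Type} [Fintype Ω] (P X : Ω → ℝ) (A : Ω → Prop) : ℝ :=
  (∑ ω, if A ω then P ω * X ω else 0) / pr P A

/-- Conditional probability `P(A | B)`. -/
noncomputable def cpr {Ω : Type} [Fintype Ω] (P : Ω → ℝ) (A B : Ω → Prop) : ℝ :=
  pr P (fun ω => A ω ∧ B ω) / pr P B

/-- `ω` is vigilant w.r.t. `(PaH, H, U, U₀)`: if shutting down is conditionally
preferable given the human's information, the human requests shutdown (`H ω = false`). -/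
def Vigilant {Ω O : Type} [Fintype Ω] (P : Ω → ℝ) (PaH : Ω → O)
    (H : Ω → Bool) (U U₀ : Ω → ℝ) (ω : Ω) : Prop :=
  cexp P U (fun ω' => PaH ω' = PaH ω) < cexp P U₀ (fun ω' => PaH ω' = PaH ω) → H ω = false

/-!
By the law of total expectation it is enough to compare `U₀` and `U` on each event `PaH = o`.
If shutdown were strictly better there, vigilance would make the human request it at every point
of positive mass with `PaH = o`, and obedience would then shut the system down at all these points.
Hence `U` and `U₀` agree almost surely given `PaH = o`, so shutdown is not strictly better there.
-/

section ConditionalExpectation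

variable {Ω O : Type} [Fintype Ω] {P X Y : Ω → ℝ} {A : Ω → Prop}

theorem pr_nonneg (hP : ∀ ω, 0 ≤ P ω) : 0 ≤ pr P A :=
  sum_nonneg fun ω _ => ite_nonneg (hP ω) le_rfl

theorem eq_zero_of_pr_eq_zero (hP : ∀ ω, 0 ≤ P ω) (hA : pr P A = 0) {ω : Ω} (hω : A ω) :
    P ω = 0 := by
  have summand_eq_zero :=
    (sum_eq_zero_iff_of_nonneg fun ω _ => ite_nonneg (hP ω) le_rfl).mp hA ω (mem_univ ω)
  rwa [if_pos hω] at summand_eq_zero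

theorem pr_mul_cexp (hP : ∀ ω, 0 ≤ P ω) (X : Ω → ℝ) (A : Ω → Prop) :
    pr P A * cexp P X A = ∑ ω, if A ω then P ω * X ω else 0 := by
  refine mul_div_cancel_of_imp' fun hA => sum_eq_zero fun ω _ => ?_
  refine ite_eq_right_iff.mpr fun hω => ?_
  rw [eq_zero_of_pr_eq_zero hP hA hω, zero_mul]

theorem cexp_congr (hXY : ∀ ω, A ω → P ω ≠ 0 → X ω = Y ω) : cexp P X A = cexp P Y A := by
  refine congrArg (· / pr P A) (sum_congr rfl fun ω _ => ?_)
  refine ite_congr rfl (fun hω => ?_) fun _ => rfl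
  exact mul_eq_mul_left_iff.mpr (or_iff_not_imp_right.mpr (hXY ω hω))

theorem pexp_eq_sum_pr_mul_cexp (hP : ∀ ω, 0 ≤ P ω) (X : Ω → ℝ) (f : Ω → O) :
    pexp P X = ∑ o ∈ univ.image f, pr P (f · = o) * cexp P X (f · = o) := by
  simp only [pr_mul_cexp hP, ← sum_filter]
  exact (sum_fiberwise_of_maps_to (fun ω _ => mem_image_of_mem f (mem_univ ω))
    fun ω => P ω * X ω).symm

theorem pexp_le_pexp_of_cexp_le_cexp (hP : ∀ ω, 0 ≤ P ω) (f : Ω → O)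
    (hXY : ∀ o, 0 < pr P (f · = o) → cexp P X (f · = o) ≤ cexp P Y (f · = o)) :
    pexp P X ≤ pexp P Y := by
  rw [pexp_eq_sum_pr_mul_cexp hP X f, pexp_eq_sum_pr_mul_cexp hP Y f]
  refine sum_le_sum fun o _ => ?_
  rcases (pr_nonneg hP).eq_or_lt with fiber_null | fiber_pos
  · rw [← fiber_null, zero_mul, zero_mul]
  · exact mul_le_mul_of_nonneg_left (hXY o fiber_pos) fiber_pos.le

end ConditionalExpectation

section Shutdown

variable {Ω O : Type} [Fintype Ω] {P : Ω → ℝ} {PaH : Ω → O} {H : Ω → Bool} {U U₀ : Ω → ℝ}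

theorem cexp_shutdown_le_cexp_of_vigilant (hP : ∀ ω, 0 ≤ P ω)
    (hvig : ∀ ω, 0 < P ω → Vigilant P PaH H U U₀ ω)
    (hreq : ∀ ω, 0 < P ω → H ω = false → U ω = U₀ ω) (o : O) :
    cexp P U₀ (PaH · = o) ≤ cexp P U (PaH · = o) := by
  by_contra! shutdown_better
  refine shutdown_better.ne (cexp_congr fun ω hω hPω => ?_)
  have hpos : 0 < P ω := (hP ω).lt_of_ne' hPω
  subst hω
  exact hreq ω hpos (hvig ω hpos shutdown_better)

theorem stmt1_general (hP : ∀ ω, 0 ≤ P ω) {S S₀ : Ω → Bool}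
    (hSDcons : ∀ ω, S ω = false → U ω = U₀ ω)
    (hHcons : ∀ ω, H ω = false → S ω = S₀ ω)
    (hobed : ∀ ω, 0 < P ω → S₀ ω = false)
    (hvig : ∀ ω, 0 < P ω → Vigilant P PaH H U U₀ ω) :
    pexp P U₀ ≤ pexp P U := by
  have eq_of_request : ∀ ω, 0 < P ω → H ω = false → U ω = U₀ ω := fun ω hpos hH =>
    hSDcons ω ((hHcons ω hH).trans (hobed ω hpos))
  exact pexp_le_pexp_of_cexp_le_cexp hP PaH fun o _ =>
    cexp_shutdown_le_cexp_of_vigilant hP hvig eq_of_request o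

end Shutdown

/-- Shutdown instructability benefit: if the policy is obedient,
ensures vigilance, and is cautious, then it is beneficial: E[U] ≥ 0. -/
theorem stmt1 {Ω O : Type} [Fintype Ω] [Fintype O]
    (P : Ω → ℝ) (hP0 : ∀ ω, 0 ≤ P ω) (hP1 : ∑ ω, P ω = 1)
    (PaH : Ω → O) (H S S₀ : Ω → Bool) (U U₀ : Ω → ℝ)
    (hSDcons : ∀ ω, S ω = false → U ω = U₀ ω)
    (hHcons : ∀ ω, H ω = false → S ω = S₀ ω)
    (hobed : ∀ ω, 0 < P ω → S₀ ω = false)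
    (hvig : ∀ ω, 0 < P ω → Vigilant P PaH H U U₀ ω)
    (hcautious : pexp P U₀ ≥ 0) :
    pexp P U ≥ 0 :=
  hcautious.trans (stmt1_general hP0 hSDcons hHcons hobed hvig)
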